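/- For all w, x, y, z ∈ 𝕆 one has Φ(w, x, y, z) = ⟨w, (x·ȳ)·z⟩ − ⟨w, x⟩·⟨y, z⟩ + ⟨w, y⟩·⟨x, z⟩ − ⟨w, z⟩·⟨x, y⟩. -/

import Mathlib

open scoped InnerProductSpace

/-! In a real unital composition algebra, the adjoint of right multiplication by `y` is right
multiplication by `ȳ`, so polarizing `(xȳ)y = ‖y‖² x` gives `(xȳ)z + (xz̄)y = 2⟨y,z⟩x`.
The particular case `xȳ + yx̄ = 2⟨x,y⟩1` then yields
`(xȳ)z + (zȳ)x = 2(⟨y,z⟩x - ⟨x,z⟩y + ⟨x,y⟩z)`, and half of this is the difference between `(xȳ)z`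
and its antisymmetrization `x × y × z`. -/

section Conjugation

variable {F : Type*} [NormedAddCommGroup F] [InnerProductSpace ℝ F]

/-- The conjugation `x ↦ x̄` of a composition algebra with unit `e`, encoded as the reflection in
the line `ℝ e` so that it is an isometric involution by construction. -/
noncomputable def unitConj (e : F) : F ≃ₗᵢ[ℝ] F := (ℝ ∙ e).reflection

theorem unitConj_apply {e : F} (he : ‖e‖ = 1) (x : F) :
    unitConj e x = (2 * ⟪x, e⟫_ℝ) • e - x := by
  simp [unitConj, Submodule.reflection_singleton_apply, he, real_inner_comm, two_smul, two_mul,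
    add_smul]

@[simp]
theorem unitConj_unitConj (e x : F) : unitConj e (unitConj e x) = x :=
  Submodule.reflection_reflection _ x

end Conjugation

/-- An orthogonal multiplication in the sense of Hurwitz and Radon: a bilinear map
`E × F → G` under which norms multiply. The product of a composition algebra is the case
`E = F = G`. -/
def IsOrthogonalMul {E F G : Type*}
    [SeminormedAddCommGroup E] [InnerProductSpace ℝ E]
    [SeminormedAddCommGroup F] [InnerProductSpace ℝ F]
    [SeminormedAddCommGroup G] [InnerProductSpace ℝ G] (mul : E →ₗ[ℝ] F →ₗ[ℝ] G) : Prop :=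
  ∀ x y, ‖mul x y‖ = ‖x‖ * ‖y‖

namespace IsOrthogonalMul

section Polarization

variable {E F G : Type*} [SeminormedAddCommGroup E] [InnerProductSpace ℝ E]
  [SeminormedAddCommGroup F] [InnerProductSpace ℝ F]
  [SeminormedAddCommGroup G] [InnerProductSpace ℝ G] {mul : E →ₗ[ℝ] F →ₗ[ℝ] G}

theorem inner_mul_mul_same_right (hmul : IsOrthogonalMul mul) (a c : E) (b : F) :
    ⟪mul a b, mul c b⟫_ℝ = ⟪a, c⟫_ℝ * ‖b‖ ^ 2 := by
  have norm_add : ‖mul a b + mul c b‖ = ‖a + c‖ * ‖b‖ := by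
    rw [← hmul, map_add, LinearMap.add_apply]
  simp only [real_inner_eq_norm_add_mul_self_sub_norm_mul_self_sub_norm_mul_self_div_two,
    norm_add, hmul a b, hmul c b]
  ring

theorem inner_mul_mul_add_inner_mul_mul_swap (hmul : IsOrthogonalMul mul) (a c : E) (b d : F) :
    ⟪mul a b, mul c d⟫_ℝ + ⟪mul a d, mul c b⟫_ℝ = 2 * ⟪a, c⟫_ℝ * ⟪b, d⟫_ℝ := by
  have polarized := hmul.inner_mul_mul_same_right a c (b + d)
  simp only [map_add, inner_add_left, inner_add_right, hmul.inner_mul_mul_same_right,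
    norm_add_sq_real] at polarized
  linarith

end Polarization

section RightUnit

variable {F : Type*} [NormedAddCommGroup F] [InnerProductSpace ℝ F] {e : F}

theorem inner_mul_left_eq_inner_mul_unitConj {E : Type*}
    [SeminormedAddCommGroup E] [InnerProductSpace ℝ E] {mul : E →ₗ[ℝ] F →ₗ[ℝ] E}
    (hmul : IsOrthogonalMul mul) (he : ‖e‖ = 1) (mul_unit : ∀ x, mul x e = x) (x z : E) (y : F) :
    ⟪mul x y, z⟫_ℝ = ⟪x, mul z (unitConj e y)⟫_ℝ := by
  have polarized := hmul.inner_mul_mul_add_inner_mul_mul_swap x z y e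
  rw [mul_unit, mul_unit] at polarized
  rw [unitConj_apply he, map_sub, map_smul, mul_unit, inner_sub_right, real_inner_smul_right]
  linarith

theorem mul_unitConj_mul_add_swap_right {E : Type*}
    [NormedAddCommGroup E] [InnerProductSpace ℝ E] {mul : E →ₗ[ℝ] F →ₗ[ℝ] E}
    (hmul : IsOrthogonalMul mul) (he : ‖e‖ = 1) (mul_unit : ∀ x, mul x e = x) (x : E) (y z : F) :
    mul (mul x (unitConj e y)) z + mul (mul x (unitConj e z)) y = (2 * ⟪y, z⟫_ℝ) • x := by
  refine ext_inner_right ℝ fun w ↦ ?_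
  have adjoint := hmul.inner_mul_left_eq_inner_mul_unitConj he mul_unit
  calc
    _ = ⟪mul x (unitConj e y), mul w (unitConj e z)⟫_ℝ +
          ⟪mul x (unitConj e z), mul w (unitConj e y)⟫_ℝ := by
      rw [inner_add_left, adjoint _ w z, adjoint _ w y]
    _ = 2 * ⟪x, w⟫_ℝ * ⟪y, z⟫_ℝ := by
      rw [hmul.inner_mul_mul_add_inner_mul_mul_swap, LinearIsometryEquiv.inner_map_map]
    _ = ⟪(2 * ⟪y, z⟫_ℝ) • x, w⟫_ℝ := by
      rw [real_inner_smul_left]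
      ring

end RightUnit

section Unital

variable {O : Type*} [NormedAddCommGroup O] [InnerProductSpace ℝ O] {mul : O →ₗ[ℝ] O →ₗ[ℝ] O}
  {e : O}

theorem mul_unitConj_add_swap (hmul : IsOrthogonalMul mul) (he : ‖e‖ = 1)
    (unit_mul : ∀ x, mul e x = x) (mul_unit : ∀ x, mul x e = x) (x y : O) :
    mul x (unitConj e y) + mul y (unitConj e x) = (2 * ⟪x, y⟫_ℝ) • e := by
  simpa [unit_mul] using
    hmul.mul_unitConj_mul_add_swap_right he mul_unit e (unitConj e x) (unitConj e y)

theorem mul_unitConj_mul_add_swap_outer (hmul : IsOrthogonalMul mul) (he : ‖e‖ = 1)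
    (unit_mul : ∀ x, mul e x = x) (mul_unit : ∀ x, mul x e = x) (x y z : O) :
    mul (mul x (unitConj e y)) z + mul (mul z (unitConj e y)) x =
      (2 : ℝ) • (⟪y, z⟫_ℝ • x - ⟪x, z⟫_ℝ • y + ⟪x, y⟫_ℝ • z) := by
  have swap_yz := hmul.mul_unitConj_mul_add_swap_right he mul_unit x y z
  have swap_yx := hmul.mul_unitConj_mul_add_swap_right he mul_unit z y x
  have sum_mul_y : mul (mul x (unitConj e z)) y + mul (mul z (unitConj e x)) y =
      (2 * ⟪x, z⟫_ℝ) • y := by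
    rw [← LinearMap.add_apply, ← map_add, hmul.mul_unitConj_add_swap he unit_mul mul_unit,
      map_smul, LinearMap.smul_apply, unit_mul]
  rw [eq_sub_of_add_eq swap_yz, eq_sub_of_add_eq swap_yx, real_inner_comm x y,
    sub_add_sub_comm, sum_mul_y]
  module

end Unital

end IsOrthogonalMul

theorem cayley_calibration_inner_formula_general
    {O : Type*} [NormedAddCommGroup O] [InnerProductSpace ℝ O]
    (mul : O →ₗ[ℝ] O →ₗ[ℝ] O) (e : O) (he : ‖e‖ = 1)
    (unit_left : ∀ x : O, mul e x = x) (unit_right : ∀ x : O, mul x e = x)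
    (norm_mul : ∀ x y : O, ‖mul x y‖ = ‖x‖ * ‖y‖)
    (conj : O → O) (hconj : ∀ x : O, conj x = (2 * ⟪x, e⟫_ℝ) • e - x)
    (cross : O → O → O → O)
    (hcross : ∀ x y z : O,
      cross x y z = (1 / 2 : ℝ) • (mul (mul x (conj y)) z - mul (mul z (conj y)) x))
    (Phi : O → O → O → O → ℝ)
    (hPhi : ∀ w x y z : O, Phi w x y z = ⟪w, cross x y z⟫_ℝ)
    (w x y z : O) :
    Phi w x y z = ⟪w, mul (mul x (conj y)) z⟫_ℝ - ⟪w, x⟫_ℝ * ⟪y, z⟫_ℝ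
      + ⟪w, y⟫_ℝ * ⟪x, z⟫_ℝ - ⟪w, z⟫_ℝ * ⟪x, y⟫_ℝ := by
  have hmul : IsOrthogonalMul mul := norm_mul
  have conj_eq : conj y = unitConj e y := by rw [hconj, unitConj_apply he]
  have cross_eq : cross x y z =
      mul (mul x (conj y)) z - ⟪y, z⟫_ℝ • x + ⟪x, z⟫_ℝ • y - ⟪x, y⟫_ℝ • z := by
    rw [hcross, conj_eq, eq_sub_of_add_eq'
      (hmul.mul_unitConj_mul_add_swap_outer he unit_left unit_right x y z)]
    module
  rw [hPhi, cross_eq]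
  simp only [inner_sub_right, inner_add_right, real_inner_smul_right]
  ring

/-- For all `w, x, y, z ∈ 𝕆` the Cayley calibration
`Φ(w,x,y,z) = ⟨w, x × y × z⟩`, where `x × y × z = ½((x·ȳ)·z − (z·ȳ)·x)`, satisfies
`Φ(w,x,y,z) = ⟨w,(x·ȳ)·z⟩ − ⟨w,x⟩⟨y,z⟩ + ⟨w,y⟩⟨x,z⟩ − ⟨w,z⟩⟨x,y⟩`. -/
theorem cayley_calibration_inner_formula
    {O : Type*} [NormedAddCommGroup O] [InnerProductSpace ℝ O]
    (hdim : Module.finrank ℝ O = 8)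
    (mul : O →ₗ[ℝ] O →ₗ[ℝ] O) (e : O) (he : ‖e‖ = 1)
    (unit_left : ∀ x : O, mul e x = x) (unit_right : ∀ x : O, mul x e = x)
    (norm_mul : ∀ x y : O, ‖mul x y‖ = ‖x‖ * ‖y‖)
    (conj : O → O) (hconj : ∀ x : O, conj x = (2 * ⟪x, e⟫_ℝ) • e - x)
    (cross : O → O → O → O)
    (hcross : ∀ x y z : O,
      cross x y z = (1 / 2 : ℝ) • (mul (mul x (conj y)) z - mul (mul z (conj y)) x))
    (Phi : O → O → O → O → ℝ)
    (hPhi : ∀ w x y z : O, Phi w x y z = ⟪w, cross x y z⟫_ℝ)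
    (w x y z : O) :
    Phi w x y z = ⟪w, mul (mul x (conj y)) z⟫_ℝ - ⟪w, x⟫_ℝ * ⟪y, z⟫_ℝ
      + ⟪w, y⟫_ℝ * ⟪x, z⟫_ℝ - ⟪w, z⟫_ℝ * ⟪x, y⟫_ℝ := by
  exact cayley_calibration_inner_formula_general mul e he unit_left unit_right norm_mul conj hconj
    cross hcross Phi hPhi w x y z
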